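/- Let H be a complex Hilbert space, M a von Neumann algebra acting on H, ξ₀ a cyclic and separating vector for M, and N another von Neumann algebra acting on H with the closure of {b ξ₀ : b ∈ N, b ≥ 0} contained in P♯. Let α : N → B(H) be a linear map such that α(x) ∈ M and α(x) ξ₀ = x ξ₀ for every x ∈ N. Then there exists an orthogonal projection g ∈ M that lies in the von Neumann algebra generated by α(N), commutes with every element of α(N), and satisfies: α(xy) g = α(x) α(y) g and α(xy) (1 − g) = α(y) α(x) (1 − g) for all x, y ∈ N. -/

import Mathlib

open scoped InnerProductSpace
open Filter

variable {H : Type*} [NormedAddCommGroup H] [InnerProductSpace ℂ H] [CompleteSpace H]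

/-- The positive cone `P♯`: the closure in `H` of `{a ξ₀ : a ∈ M, a positive}`. -/
def sharpCone (M : VonNeumannAlgebra H) (ξ₀ : H) : Set H :=
  closure {ζ : H | ∃ a : H →L[ℂ] H, a ∈ M ∧ a.IsPositive ∧ a ξ₀ = ζ}

/-- `ξ₀` is a cyclic vector for `M`: the linear span of `{x ξ₀ : x ∈ M}` is dense in `H`. -/
def IsCyclicVector (M : VonNeumannAlgebra H) (ξ₀ : H) : Prop :=
  Dense ((Submodule.span ℂ ((fun x : H →L[ℂ] H => x ξ₀) '' (M : Set (H →L[ℂ] H)))) : Set H)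

/-- `ξ₀` is a separating vector for `M`: `x ∈ M` and `x ξ₀ = 0` imply `x = 0`. -/
def IsSeparatingVector (M : VonNeumannAlgebra H) (ξ₀ : H) : Prop :=
  ∀ x : H →L[ℂ] H, x ∈ M → x ξ₀ = 0 → x = 0

/-!
An element of `M` moving the separating vector `ξ₀` into `P♯` is positive, because `ξ₀` is cyclic
for the commutant of `M`; hence `α` is positive and unital. A positive unital map `φ` satisfies
Kadison's inequality `φ a * φ a ≤ φ (a * a)` for self-adjoint `a`: for `0 ≤ a ≤ 1` the images of the
Bernstein polynomials `bₙₖ(a)` are positive operators of sum `1`, their mean and second moment are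
`n φ a` and `n (n - 1) φ (a * a) + n φ a`, and nonnegativity of the variance gives the inequality up
to an error of order `1 / n`. Both sides have the same expectation at `ξ₀` when `φ = α`, so
equality holds and `α` is a Jordan `*`-homomorphism.

For a Jordan `*`-homomorphism `φ`, the identities for the triple product `a * b * c + c * b * a`
show that every `φ (x * y) - φ x * φ y` annihilates every `φ (a * b) - φ b * φ a` from the left. The
projection `g` onto the common kernel of the former operators therefore fixes the range of the
latter, and splits `φ` into a homomorphism and an antihomomorphism.
-/

section JordanAlgebra

attribute [local instance] LieRing.ofAssociativeRing

variable {R A B : Type*} [CommRing R] [Ring A] [Algebra R A] [Ring B] [Algebra R B]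

/-- A linear map preserving squares, equivalently (in the absence of `2`-torsion) a homomorphism
for the Jordan product `a * b + b * a`. -/
def IsJordanHom (φ : A →ₗ[R] B) : Prop :=
  ∀ a, φ (a * a) = φ a * φ a

/-- The bilinear map `(a, b) ↦ φ (a * b) - φ a * φ b`, measuring the failure of `φ` to be a
homomorphism. -/
def homDefect (φ : A →ₗ[R] B) : A →ₗ[R] A →ₗ[R] B :=
  (LinearMap.mul R A).compr₂ φ - (LinearMap.mul R B).compl₁₂ φ φ

/-- The bilinear map `(a, b) ↦ φ (a * b) - φ b * φ a`, measuring the failure of `φ` to be an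
antihomomorphism. -/
def antihomDefect (φ : A →ₗ[R] B) : A →ₗ[R] A →ₗ[R] B :=
  (LinearMap.mul R A).compr₂ φ - (LinearMap.mul R B).flip.compl₁₂ φ φ

theorem homDefect_apply (φ : A →ₗ[R] B) (a b : A) :
    homDefect φ a b = φ (a * b) - φ a * φ b := rfl

theorem antihomDefect_apply (φ : A →ₗ[R] B) (a b : A) :
    antihomDefect φ a b = φ (a * b) - φ b * φ a := rfl

theorem antihomDefect_sub_homDefect (φ : A →ₗ[R] B) (a b : A) :
    antihomDefect φ a b - homDefect φ a b = ⁅φ a, φ b⁆ := by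
  rw [antihomDefect_apply, homDefect_apply, Ring.lie_def]
  abel

namespace IsJordanHom

variable {φ : A →ₗ[R] B}

theorem isAlt_homDefect (h : IsJordanHom φ) : (homDefect φ).IsAlt := fun a =>
  sub_eq_zero.mpr (h a)

theorem isAlt_antihomDefect (h : IsJordanHom φ) : (antihomDefect φ).IsAlt := fun a =>
  sub_eq_zero.mpr (h a)

theorem map_mul_add_mul (h : IsJordanHom φ) (a b : A) :
    φ (a * b + b * a) = φ a * φ b + φ b * φ a := by
  have hneg := h.isAlt_homDefect.neg a b
  rw [homDefect_apply, homDefect_apply, neg_sub, sub_eq_sub_iff_add_eq_add] at hneg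
  rw [map_add, add_comm, ← hneg, add_comm]

theorem antihomDefect_add_homDefect (h : IsJordanHom φ) (a b : A) :
    antihomDefect φ a b + homDefect φ a b = φ ⁅a, b⁆ := by
  have hanti := h.isAlt_antihomDefect.neg b a
  rw [← hanti, antihomDefect_apply, homDefect_apply, Ring.lie_def, map_sub]
  abel

variable [IsAddTorsionFree B]

theorem map_mul_mul_self (h : IsJordanHom φ) (a b : A) :
    φ (a * b * a) = φ a * φ b * φ a := by
  have hab := h.map_mul_add_mul a (a * b + b * a)
  have haa := h.map_mul_add_mul (a * a) b
  rw [h.map_mul_add_mul a b] at hab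
  rw [h a] at haa
  have key : 2 • (a * b * a) =
      a * (a * b + b * a) + (a * b + b * a) * a - (a * a * b + b * (a * a)) := by noncomm_ring
  refine (nsmul_right_inj two_ne_zero).mp ?_
  rw [← map_nsmul, key, map_sub, hab, haa]
  noncomm_ring

theorem map_mul_mul_add_mul_mul (h : IsJordanHom φ) (a b c : A) :
    φ (a * b * c + c * b * a) = φ a * φ b * φ c + φ c * φ b * φ a := by
  have key : a * b * c + c * b * a = (a + c) * b * (a + c) - a * b * a - c * b * c := by
    noncomm_ring
  rw [key]
  simp only [map_sub, h.map_mul_mul_self, map_add]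
  noncomm_ring

theorem map_lie_lie (h : IsJordanHom φ) (a b c : A) :
    φ ⁅⁅a, b⁆, c⁆ = ⁅⁅φ a, φ b⁆, φ c⁆ := by
  have key : ⁅⁅a, b⁆, c⁆ = (a * b * c + c * b * a) - (b * a * c + c * a * b) := by
    simp only [Ring.lie_def]
    noncomm_ring
  rw [key, map_sub, h.map_mul_mul_add_mul_mul, h.map_mul_mul_add_mul_mul]
  simp only [Ring.lie_def]
  noncomm_ring

theorem map_lie_mul_mul_lie (h : IsJordanHom φ) (a b c : A) :
    φ (⁅a, b⁆ * c * ⁅a, b⁆) = ⁅φ a, φ b⁆ * φ c * ⁅φ a, φ b⁆ := by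
  have key : ⁅a, b⁆ * c * ⁅a, b⁆ = (a * b + b * a) * c * (a * b + b * a) -
      2 • (a * (b * c * b) * a) - 2 • (b * (a * c * a) * b) := by
    rw [Ring.lie_def]
    noncomm_ring
  rw [key]
  simp only [map_sub, map_nsmul, h.map_mul_mul_self, h.map_mul_add_mul, Ring.lie_def]
  noncomm_ring

theorem homDefect_lie_left (h : IsJordanHom φ) (a b c : A) :
    homDefect φ ⁅a, b⁆ c = ⁅φ c, homDefect φ a b⁆ := by
  have hadd := h.antihomDefect_add_homDefect ⁅a, b⁆ c
  have hsub := antihomDefect_sub_homDefect φ ⁅a, b⁆ c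
  rw [h.map_lie_lie, ← antihomDefect_sub_homDefect φ a b] at hadd
  rw [← h.antihomDefect_add_homDefect a b] at hsub
  refine (nsmul_right_inj two_ne_zero).mp ?_
  calc (2 : ℕ) • homDefect φ ⁅a, b⁆ c
      = ⁅antihomDefect φ a b - homDefect φ a b, φ c⁆ -
          ⁅antihomDefect φ a b + homDefect φ a b, φ c⁆ := by rw [← hadd, ← hsub]; abel
    _ = (2 : ℕ) • ⁅φ c, homDefect φ a b⁆ := by simp only [Ring.lie_def]; noncomm_ring

theorem lie_antihomDefect_homDefect (h : IsJordanHom φ) (a b x y : A) :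
    ⁅antihomDefect φ a b, homDefect φ x y⁆ = ⁅homDefect φ a b, antihomDefect φ x y⁆ := by
  have hxy := h.map_lie_lie a b ⁅x, y⁆
  have hab := h.map_lie_lie x y ⁅a, b⁆
  simp only [← antihomDefect_sub_homDefect φ] at hxy hab
  rw [← h.antihomDefect_add_homDefect x y] at hxy
  rw [← h.antihomDefect_add_homDefect a b] at hab
  rw [← lie_skew ⁅x, y⁆, map_neg, hxy] at hab
  refine (nsmul_right_inj two_ne_zero).mp ?_
  simp only [Ring.lie_def] at hab ⊢
  linear_combination (norm := noncomm_ring) -hab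

theorem homDefect_mul_antihomDefect_self (h : IsJordanHom φ) (a b : A) :
    homDefect φ a b * antihomDefect φ a b = 0 := by
  have htriple := h.map_mul_mul_add_mul_mul a b (a * b)
  have hsq : a * b * (a * b) + a * b * b * a = a * b * (a * b) + a * (b * b) * a := by
    noncomm_ring
  rw [hsq, map_add, h, h.map_mul_mul_self, h] at htriple
  rw [homDefect_apply, antihomDefect_apply]
  linear_combination (norm := noncomm_ring) htriple

theorem antihomDefect_mul_homDefect_self (h : IsJordanHom φ) (a b : A) :
    antihomDefect φ a b * homDefect φ a b = 0 := by
  have hlie := h.lie_antihomDefect_homDefect a b a b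
  rw [← lie_skew (homDefect φ a b), self_eq_neg, Ring.lie_def,
    h.homDefect_mul_antihomDefect_self, sub_zero] at hlie
  exact hlie

theorem homDefect_mul_map_mul_antihomDefect_self (h : IsJordanHom φ) (a b c : A) :
    homDefect φ a b * φ c * antihomDefect φ a b =
      -(antihomDefect φ a b * φ c * homDefect φ a b) := by
  have hlie := h.map_lie_mul_mul_lie a b c
  rw [h.map_mul_mul_self, ← h.antihomDefect_add_homDefect,
    ← antihomDefect_sub_homDefect φ] at hlie
  refine (nsmul_right_inj two_ne_zero).mp ?_
  linear_combination (norm := noncomm_ring) hlie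

end IsJordanHom

end JordanAlgebra

section JordanStar

variable {A B : Type*} [Ring A] [StarRing A] [Algebra ℂ A]

section StarRing

variable [Ring B] [Algebra ℂ B] {φ : A →ₗ[ℂ] B}

theorem IsJordanHom.of_isSelfAdjoint [StarModule ℂ A]
    (hsq : ∀ a, IsSelfAdjoint a → φ (a * a) = φ a * φ a) : IsJordanHom φ := by
  have hdiag : ∀ a, IsSelfAdjoint a → homDefect φ a a = 0 := fun a ha => sub_eq_zero.mpr (hsq a ha)
  have hswap : ∀ a b, IsSelfAdjoint a → IsSelfAdjoint b →
      homDefect φ a b + homDefect φ b a = 0 := fun a b ha hb => by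
    simpa [hdiag a ha, hdiag b hb, add_comm] using hdiag (a + b) (ha.add hb)
  intro a
  rw [← sub_eq_zero, ← homDefect_apply, ← realPart_add_I_smul_imaginaryPart a]
  have hre := (realPart a).2
  have him := (imaginaryPart a).2
  simp [hdiag _ hre, hdiag _ him, ← smul_add, hswap _ _ hre him]

variable [StarRing B]

theorem star_homDefect (hstar : ∀ a, φ (star a) = star (φ a)) (a b : A) :
    star (homDefect φ a b) = homDefect φ (star b) (star a) := by
  simp only [homDefect_apply, star_sub, star_mul, ← hstar]

theorem star_antihomDefect (hstar : ∀ a, φ (star a) = star (φ a)) (a b : A) :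
    star (antihomDefect φ a b) = antihomDefect φ (star b) (star a) := by
  simp only [antihomDefect_apply, star_sub, star_mul, ← hstar]

theorem IsJordanHom.star_homDefect_of_isSelfAdjoint (h : IsJordanHom φ)
    (hstar : ∀ a, φ (star a) = star (φ a)) {a b : A} (ha : IsSelfAdjoint a)
    (hb : IsSelfAdjoint b) : star (homDefect φ a b) = -homDefect φ a b := by
  rw [star_homDefect hstar, ha.star_eq, hb.star_eq, h.isAlt_homDefect.neg]

theorem IsJordanHom.star_antihomDefect_of_isSelfAdjoint (h : IsJordanHom φ)
    (hstar : ∀ a, φ (star a) = star (φ a)) {a b : A} (ha : IsSelfAdjoint a)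
    (hb : IsSelfAdjoint b) : star (antihomDefect φ a b) = -antihomDefect φ a b := by
  rw [star_antihomDefect hstar, ha.star_eq, hb.star_eq, h.isAlt_antihomDefect.neg]

end StarRing

theorem isAddTorsionFree_of_module_complex (E : Type*) [AddCommGroup E] [Module ℂ E] :
    IsAddTorsionFree E :=
  .of_isTorsionFree ℂ E

attribute [local instance] isAddTorsionFree_of_module_complex

namespace IsJordanHom

variable [StarModule ℂ A] [NormedRing B] [StarRing B] [CStarRing B] [Algebra ℂ B]
  {φ : A →ₗ[ℂ] B}

theorem homDefect_mul_map_mul_antihomDefect_eq_zero (h : IsJordanHom φ)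
    (hstar : ∀ a, φ (star a) = star (φ a)) {a b : A} (ha : IsSelfAdjoint a)
    (hb : IsSelfAdjoint b) (c : A) :
    homDefect φ a b * φ c * antihomDefect φ a b = 0 := by
  suffices hsa : ∀ c, IsSelfAdjoint c → homDefect φ a b * φ c * antihomDefect φ a b = 0 by
    rw [← realPart_add_I_smul_imaginaryPart c]
    simp [mul_add, add_mul, hsa _ (realPart c).2, hsa _ (imaginaryPart c).2]
  intro c hc
  have hanticomm := h.homDefect_mul_map_mul_antihomDefect_self a b c
  have hskew : star (homDefect φ a b * φ c * antihomDefect φ a b) =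
      -(homDefect φ a b * φ c * antihomDefect φ a b) := by
    rw [star_mul, star_mul, h.star_homDefect_of_isSelfAdjoint hstar ha hb,
      h.star_antihomDefect_of_isSelfAdjoint hstar ha hb, ← hstar, hc.star_eq, hanticomm]
    noncomm_ring
  rw [← CStarRing.star_mul_self_eq_zero_iff, hskew]
  calc -(homDefect φ a b * φ c * antihomDefect φ a b) *
        (homDefect φ a b * φ c * antihomDefect φ a b)
      = -(homDefect φ a b * φ c * (antihomDefect φ a b * homDefect φ a b) * φ c *
          antihomDefect φ a b) := by noncomm_ring
    _ = 0 := by simp [h.antihomDefect_mul_homDefect_self]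

theorem homDefect_mul_antihomDefect_of_left_eq (h : IsJordanHom φ)
    (hstar : ∀ a, φ (star a) = star (φ a)) {a b y : A} (ha : IsSelfAdjoint a)
    (hb : IsSelfAdjoint b) (hy : IsSelfAdjoint y) :
    homDefect φ a y * antihomDefect φ a b = 0 := by
  have hqp : homDefect φ a y * antihomDefect φ a b + homDefect φ a b * antihomDefect φ a y = 0 := by
    simpa [mul_add, add_mul, h.homDefect_mul_antihomDefect_self, add_comm] using
      h.homDefect_mul_antihomDefect_self a (b + y)
  have hpq : antihomDefect φ a y * homDefect φ a b + antihomDefect φ a b * homDefect φ a y = 0 := by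
    simpa [mul_add, add_mul, h.antihomDefect_mul_homDefect_self, add_comm] using
      h.antihomDefect_mul_homDefect_self a (b + y)
  have hlie := h.homDefect_mul_map_mul_antihomDefect_eq_zero hstar ha hy ⁅a, b⁆
  rw [← h.antihomDefect_add_homDefect] at hlie
  rw [← CStarRing.star_mul_self_eq_zero_iff, star_mul,
    h.star_antihomDefect_of_isSelfAdjoint hstar ha hb,
    h.star_homDefect_of_isSelfAdjoint hstar ha hy]
  have hself := h.homDefect_mul_antihomDefect_self a b
  set p := antihomDefect φ a b
  set q := homDefect φ a b
  set r := antihomDefect φ a y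
  set s := homDefect φ a y
  calc -p * -s * (s * p) = p * s * (s * p + q * r) - p * (s * (p + q) * r)
        + (r * q + p * s) * p * r - r * (q * p) * r := by noncomm_ring
    _ = 0 := by simp [hqp, hlie, hpq, hself]

theorem homDefect_mul_antihomDefect_comm (h : IsJordanHom φ)
    (hstar : ∀ a, φ (star a) = star (φ a)) {a b x y : A} (ha : IsSelfAdjoint a)
    (hb : IsSelfAdjoint b) (hx : IsSelfAdjoint x) (hy : IsSelfAdjoint y) :
    homDefect φ x y * antihomDefect φ a b = homDefect φ a b * antihomDefect φ x y := by
  have hshared : ∀ {u v w : A}, IsSelfAdjoint u → IsSelfAdjoint v → IsSelfAdjoint w →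
      homDefect φ u w * antihomDefect φ u v = 0 :=
    h.homDefect_mul_antihomDefect_of_left_eq hstar
  have hxa : homDefect φ x y * antihomDefect φ a b + homDefect φ a y * antihomDefect φ x b = 0 := by
    simpa [mul_add, add_mul, hshared hx hb hy, hshared ha hb hy, add_comm] using
      hshared (hx.add ha) hb hy
  have hby : homDefect φ y a * antihomDefect φ b x + homDefect φ b a * antihomDefect φ y x = 0 := by
    simpa [mul_add, add_mul, hshared hb hx ha, hshared hy hx ha, add_comm] using
      hshared (hb.add hy) hx ha
  simp only [← h.isAlt_homDefect.neg a, ← h.isAlt_antihomDefect.neg x, neg_mul_neg] at hby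
  exact eq_of_sub_eq_zero (by linear_combination (norm := abel) hxa - hby)

theorem homDefect_mul_antihomDefect_of_isSelfAdjoint (h : IsJordanHom φ)
    (hstar : ∀ a, φ (star a) = star (φ a)) {a b x y : A} (ha : IsSelfAdjoint a)
    (hb : IsSelfAdjoint b) (hx : IsSelfAdjoint x) (hy : IsSelfAdjoint y) :
    homDefect φ x y * antihomDefect φ a b = 0 := by
  have hqp := h.homDefect_mul_antihomDefect_comm hstar ha hb hx hy
  have hpq : antihomDefect φ a b * homDefect φ x y = antihomDefect φ x y * homDefect φ a b := by
    have := congrArg star hqp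
    simpa only [star_mul, h.star_homDefect_of_isSelfAdjoint hstar ha hb,
      h.star_homDefect_of_isSelfAdjoint hstar hx hy, neg_mul_neg,
      h.star_antihomDefect_of_isSelfAdjoint hstar ha hb,
      h.star_antihomDefect_of_isSelfAdjoint hstar hx hy] using this
  have hcomm : antihomDefect φ a b * homDefect φ x y = homDefect φ x y * antihomDefect φ a b := by
    have hlie := h.lie_antihomDefect_homDefect a b x y
    rw [Ring.lie_def, Ring.lie_def, ← hqp, ← hpq] at hlie
    refine (nsmul_right_inj two_ne_zero).mp ?_
    linear_combination (norm := noncomm_ring) hlie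
  rw [← CStarRing.star_mul_self_eq_zero_iff, star_mul,
    h.star_antihomDefect_of_isSelfAdjoint hstar ha hb,
    h.star_homDefect_of_isSelfAdjoint hstar hx hy, neg_mul_neg]
  calc antihomDefect φ a b * homDefect φ x y * (homDefect φ x y * antihomDefect φ a b)
      = homDefect φ x y * (antihomDefect φ a b * homDefect φ a b) * antihomDefect φ x y := by
        rw [hcomm, hqp]
        nth_rewrite 1 [← hqp]
        noncomm_ring
    _ = 0 := by rw [h.antihomDefect_mul_homDefect_self, mul_zero, zero_mul]

theorem homDefect_mul_antihomDefect_eq_zero (h : IsJordanHom φ)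
    (hstar : ∀ a, φ (star a) = star (φ a)) (a b x y : A) :
    homDefect φ x y * antihomDefect φ a b = 0 := by
  have hsa : ∀ {a b x y : selfAdjoint A},
      homDefect φ (x : A) y * antihomDefect φ (a : A) b = 0 := fun {a b x y} =>
    h.homDefect_mul_antihomDefect_of_isSelfAdjoint hstar a.2 b.2 x.2 y.2
  rw [← realPart_add_I_smul_imaginaryPart a, ← realPart_add_I_smul_imaginaryPart b,
    ← realPart_add_I_smul_imaginaryPart x, ← realPart_add_I_smul_imaginaryPart y]
  simp [add_mul, mul_add, hsa]

end IsJordanHom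

end JordanStar

theorem starProjection_mem_centralizer {K : Submodule ℂ H} [K.HasOrthogonalProjection]
    {s : Set (H →L[ℂ] H)} (hs : ∀ T ∈ s, star T ∈ s)
    (hK : ∀ T ∈ s, K ∈ Module.End.invtSubmodule (T : H →ₗ[ℂ] H)) :
    K.starProjection ∈ s.centralizer := fun T hT => by
  have hidem : IsIdempotentElem K.starProjection := K.isIdempotentElem_starProjection
  refine (ContinuousLinearMap.IsIdempotentElem.commute_iff hidem |>.mpr ⟨?_, ?_⟩).symm.eq
  · rw [K.range_starProjection]
    exact hK T hT
  · rw [K.ker_starProjection]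
    exact ContinuousLinearMap.orthogonal_mem_invtSubmodule (hK _ (hs T hT))

section HomSubspace

variable {A : Type*} [Ring A] [Algebra ℂ A]

section NormedSpace

variable {E : Type*} [NormedAddCommGroup E] [NormedSpace ℂ E]

/-- The closed subspace of vectors annihilated by every `φ (a * b) - φ a * φ b`. When `φ` is a
Jordan `*`-homomorphism, it is the range of a projection that splits `φ` into a homomorphism and
an antihomomorphism. -/
def homSubspace (φ : A →ₗ[ℂ] (E →L[ℂ] E)) : Submodule ℂ E :=
  ⨅ a, ⨅ b, (homDefect φ a b).ker

variable {φ : A →ₗ[ℂ] (E →L[ℂ] E)}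

theorem mem_homSubspace {ζ : E} : ζ ∈ homSubspace φ ↔ ∀ a b, homDefect φ a b ζ = 0 := by
  simp [homSubspace]

theorem isClosed_homSubspace : IsClosed (homSubspace φ : Set E) := by
  simp only [homSubspace, Submodule.coe_iInf]
  exact isClosed_iInter fun a => isClosed_iInter fun b => (homDefect φ a b).isClosed_ker

instance [CompleteSpace E] : CompleteSpace (homSubspace φ) :=
  isClosed_homSubspace.completeSpace_coe

theorem homSubspace_mem_invtSubmodule_of_mem_centralizer {T : E →L[ℂ] E}
    (hT : T ∈ (Set.range φ).centralizer) :
    homSubspace φ ∈ Module.End.invtSubmodule (T : E →ₗ[ℂ] E) := by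
  intro ζ hζ
  refine mem_homSubspace.mpr fun a b => ?_
  have hcomm : Commute (homDefect φ a b) T :=
    (show Commute _ T from hT _ ⟨a * b, rfl⟩).sub_left <|
      Commute.mul_left (hT _ ⟨a, rfl⟩) (hT _ ⟨b, rfl⟩)
  calc homDefect φ a b (T ζ) = T (homDefect φ a b ζ) := congr($hcomm.eq ζ)
    _ = 0 := by rw [mem_homSubspace.mp hζ, map_zero]

attribute [local instance] isAddTorsionFree_of_module_complex in
theorem IsJordanHom.homSubspace_mem_invtSubmodule (h : IsJordanHom φ) (c : A) :
    homSubspace φ ∈ Module.End.invtSubmodule (φ c : E →ₗ[ℂ] E) := by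
  intro ζ hζ
  rw [mem_homSubspace] at hζ
  refine mem_homSubspace.mpr fun a b => ?_
  have hlie : φ c (homDefect φ a b ζ) - homDefect φ a b (φ c ζ) = 0 :=
    congr($(h.homDefect_lie_left a b c) ζ).symm.trans (hζ _ _)
  simpa [hζ] using hlie

end NormedSpace

variable {φ : A →ₗ[ℂ] (H →L[ℂ] H)}

theorem homDefect_mul_starProjection_homSubspace (a b : A) :
    homDefect φ a b * (homSubspace φ).starProjection = 0 := by
  ext ζ
  exact mem_homSubspace.mp ((homSubspace φ).starProjection_apply_mem ζ) a b

namespace IsJordanHom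

variable [StarRing A] [StarModule ℂ A]

theorem antihomDefect_mul_starProjection_homSubspace (h : IsJordanHom φ)
    (hstar : ∀ a, φ (star a) = star (φ a)) (a b : A) :
    antihomDefect φ a b * (homSubspace φ).starProjection = antihomDefect φ a b := by
  have hrange : (homSubspace φ).starProjection * antihomDefect φ (star b) (star a) =
      antihomDefect φ (star b) (star a) := by
    ext ζ
    refine Submodule.starProjection_eq_self_iff.mpr (mem_homSubspace.mpr fun x y => ?_)
    exact congr($(h.homDefect_mul_antihomDefect_eq_zero hstar _ _ x y) ζ)
  have hadj := congrArg star hrange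
  rwa [star_mul, star_antihomDefect hstar, star_star, star_star,
    (isSelfAdjoint_starProjection (homSubspace φ)).star_eq] at hadj

theorem exists_isStarProjection (h : IsJordanHom φ) (hstar : ∀ a, φ (star a) = star (φ a)) :
    ∃ g : H →L[ℂ] H, IsStarProjection g ∧ g ∈ (Set.range φ).centralizer.centralizer ∧
      (∀ x, g * φ x = φ x * g) ∧
      ∀ x y, φ (x * y) * g = φ x * φ y * g ∧ φ (x * y) * (1 - g) = φ y * φ x * (1 - g) := by
  have hrange : ∀ T ∈ Set.range φ, star T ∈ Set.range φ :=
    Set.forall_mem_range.mpr fun a => ⟨star a, hstar a⟩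
  refine ⟨(homSubspace φ).starProjection, isStarProjection_starProjection,
    starProjection_mem_centralizer (fun T => Set.star_mem_centralizer' hrange)
      fun T => homSubspace_mem_invtSubmodule_of_mem_centralizer,
    fun x => ?_, fun x y => ⟨?_, ?_⟩⟩
  · exact (starProjection_mem_centralizer hrange
      (Set.forall_mem_range.mpr h.homSubspace_mem_invtSubmodule) _ ⟨x, rfl⟩).symm
  · rw [← sub_eq_zero, ← sub_mul]
    exact homDefect_mul_starProjection_homSubspace x y
  · rw [← sub_eq_zero, ← sub_mul, mul_sub, mul_one, sub_eq_zero]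
    exact (h.antihomDefect_mul_starProjection_homSubspace hstar x y).symm

end IsJordanHom

end HomSubspace

section Kadison

theorem sum_smul_mul_self_le {ι B : Type*} [Ring B] [PartialOrder B] [StarRing B]
    [StarOrderedRing B] [Algebra ℝ B] [StarModule ℝ B] (s : Finset ι) (t : ι → ℝ) {w : ι → B}
    (hw : ∀ i ∈ s, 0 ≤ w i) (hsum : ∑ i ∈ s, w i = 1) :
    (∑ i ∈ s, t i • w i) * ∑ i ∈ s, t i • w i ≤ ∑ i ∈ s, (t i * t i) • w i := by
  set m := ∑ i ∈ s, t i • w i with hm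
  have hstar : star m = m := by
    rw [hm, star_sum]
    refine Finset.sum_congr rfl fun i hi => ?_
    rw [star_smul, star_trivial, (IsSelfAdjoint.of_nonneg (hw i hi)).star_eq]
  have hnonneg : 0 ≤ ∑ i ∈ s, (m - t i • 1) * w i * (m - t i • 1) :=
    Finset.sum_nonneg fun i hi => IsSelfAdjoint.conjugate_nonneg (hw i hi) <| by
      rw [IsSelfAdjoint, star_sub, hstar, star_smul, star_one, star_trivial]
  rw [← sub_nonneg]
  convert hnonneg using 1
  calc ∑ i ∈ s, (t i * t i) • w i - m * m
      = m * (∑ i ∈ s, w i) * m - m * (∑ i ∈ s, t i • w i) - (∑ i ∈ s, t i • w i) * m +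
          ∑ i ∈ s, (t i * t i) • w i := by rw [hsum, ← hm]; noncomm_ring
    _ = ∑ i ∈ s, (m - t i • 1) * w i * (m - t i • 1) := by
      simp only [Finset.mul_sum, Finset.sum_mul, ← Finset.sum_sub_distrib,
        ← Finset.sum_add_distrib]
      refine Finset.sum_congr rfl fun i _ => ?_
      simp only [sub_mul, mul_sub, smul_mul_assoc, mul_smul_comm, one_mul, mul_one, mul_smul,
        smul_sub]
      abel

theorem sum_mul_self_smul_bernsteinPolynomial (R : Type*) [CommRing R] (n : ℕ) :
    ∑ k ∈ Finset.range (n + 1), (k * k) • bernsteinPolynomial R n k =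
      (n * (n - 1)) • Polynomial.X ^ 2 + n • Polynomial.X := by
  rw [← bernsteinPolynomial.sum_mul_smul, ← bernsteinPolynomial.sum_smul,
    ← Finset.sum_add_distrib]
  refine Finset.sum_congr rfl fun k _ => ?_
  rw [← add_smul, Nat.mul_sub_one, Nat.sub_add_cancel k.le_mul_self]

variable {A : Type*} [CStarAlgebra A] [PartialOrder A] [StarOrderedRing A]

theorem aeval_bernsteinPolynomial_nonneg {a : A} (h₀ : 0 ≤ a) (h₁ : a ≤ 1) (n k : ℕ) :
    0 ≤ Polynomial.aeval a (bernsteinPolynomial ℂ n k) := by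
  have hval : Polynomial.aeval a (bernsteinPolynomial ℂ n k) =
      n.choose k • (a ^ k * (1 - a) ^ (n - k)) := by
    simp [bernsteinPolynomial, mul_assoc]
  rw [hval]
  refine nsmul_nonneg (Commute.mul_nonneg (CStarAlgebra.pow_nonneg h₀ _)
    (CStarAlgebra.pow_nonneg (sub_nonneg.mpr h₁) _) ?_) _
  exact ((Commute.one_right _).sub_right (Commute.refl _)).pow_pow _ _

variable {S : StarSubalgebra ℂ A}

instance : SelfAdjointDecompose S where
  exists_nonneg_sub_nonneg {a} ha := by
    have ha' : IsSelfAdjoint (a : A) := congrArg Subtype.val ha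
    have hnonneg : (0 : A) ≤ algebraMap ℝ A ‖(a : A)‖ := algebraMap_nonneg A (norm_nonneg _)
    refine ⟨algebraMap ℝ S ‖(a : A)‖ + a, algebraMap ℝ S ‖(a : A)‖, ?_, hnonneg, by simp⟩
    exact Subtype.coe_le_coe.mp (neg_le_iff_add_nonneg'.mp ha'.neg_algebraMap_norm_le_self)

variable {B : Type*} [CStarAlgebra B] [PartialOrder B] [StarOrderedRing B]

theorem map_mul_self_le_add_inv_smul (φ : S →ₚ[ℂ] B) (hone : φ 1 = 1) {a : S} (h₀ : 0 ≤ a)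
    (h₁ : a ≤ 1) {n : ℕ} (hn : n ≠ 0) :
    φ a * φ a ≤ φ (a * a) + (n : ℝ)⁻¹ • (φ a - φ (a * a)) := by
  have hnonneg : ∀ k ∈ Finset.range (n + 1),
      0 ≤ φ (Polynomial.aeval a (bernsteinPolynomial ℂ n k)) := fun k _ => by
    refine φ.map_nonneg (show 0 ≤ S.subtype _ from ?_)
    rw [← Polynomial.aeval_algHom_apply]
    exact aeval_bernsteinPolynomial_nonneg h₀ h₁ n k
  have himage : ∀ c : ℕ → ℕ, ∑ k ∈ Finset.range (n + 1),
      (c k : ℝ) • φ (Polynomial.aeval a (bernsteinPolynomial ℂ n k)) =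
      φ (Polynomial.aeval a (∑ k ∈ Finset.range (n + 1), c k • bernsteinPolynomial ℂ n k)) := by
    simp only [map_sum, map_nsmul, Nat.cast_smul_eq_nsmul, implies_true]
  have hsum : ∑ k ∈ Finset.range (n + 1),
      φ (Polynomial.aeval a (bernsteinPolynomial ℂ n k)) = 1 := by
    rw [← map_sum, ← map_sum, bernsteinPolynomial.sum, map_one, hone]
  have hvar := sum_smul_mul_self_le _ (fun k : ℕ => (k : ℝ)) hnonneg hsum
  simp only [← Nat.cast_mul] at hvar
  rw [himage, himage, sum_mul_self_smul_bernsteinPolynomial, bernsteinPolynomial.sum_smul] at hvar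
  have hscale := smul_le_smul_of_nonneg_left hvar (by positivity : 0 ≤ ((n : ℝ) * n)⁻¹)
  simp only [map_add, map_nsmul, map_pow, Polynomial.aeval_X] at hscale
  have hn' : (n : ℝ) ≠ 0 := Nat.cast_ne_zero.mpr hn
  convert hscale using 1
  · simp only [← Nat.cast_smul_eq_nsmul ℝ]
    rw [smul_mul_smul_comm, smul_smul, inv_mul_cancel₀ (mul_ne_zero hn' hn'), one_smul]
  · simp only [← Nat.cast_smul_eq_nsmul ℝ, pow_two]
    push_cast [Nat.one_le_iff_ne_zero.mpr hn]
    match_scalars <;> field_simp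
    ring

theorem map_mul_self_le_of_nonneg_of_le_one (φ : S →ₚ[ℂ] B) (hone : φ 1 = 1) {a : S} (h₀ : 0 ≤ a)
    (h₁ : a ≤ 1) : φ a * φ a ≤ φ (a * a) := by
  have hlim : Tendsto (fun n : ℕ => φ (a * a) + (n : ℝ)⁻¹ • (φ a - φ (a * a))) atTop
      (nhds (φ (a * a))) := by
    simpa using (tendsto_inv_atTop_nhds_zero_nat (𝕜 := ℝ)).smul_const (φ a - φ (a * a))
      |>.const_add (φ (a * a))
  exact ge_of_tendsto hlim <| (eventually_ne_atTop 0).mono fun n hn =>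
    map_mul_self_le_add_inv_smul φ hone h₀ h₁ hn

theorem nonneg_add_half_and_le_one {a : A} (ha : IsSelfAdjoint a) (hnorm : ‖a‖ ≤ 1 / 2) :
    0 ≤ a + algebraMap ℝ A (1 / 2) ∧ a + algebraMap ℝ A (1 / 2) ≤ 1 := by
  have hbound : algebraMap ℝ A ‖a‖ ≤ algebraMap ℝ A (1 / 2) := algebraMap_mono A hnorm
  constructor
  · exact neg_le_iff_add_nonneg.mp ((neg_le_neg hbound).trans ha.neg_algebraMap_norm_le_self)
  · calc a + algebraMap ℝ A (1 / 2) ≤ algebraMap ℝ A (1 / 2) + algebraMap ℝ A (1 / 2) := by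
          gcongr
          exact ha.le_algebraMap_norm_self.trans hbound
      _ = 1 := by rw [← map_add, add_halves, map_one]

theorem map_mul_self_le_of_isSelfAdjoint (φ : S →ₚ[ℂ] B) (hone : φ 1 = 1) {a : S}
    (ha : IsSelfAdjoint a) : φ a * φ a ≤ φ (a * a) := by
  -- Rescaling `a` and adding a scalar brings it into `[0, 1]` and preserves the inequality.
  obtain ⟨t, ht, hnorm⟩ : ∃ t : ℝ, 0 < t ∧ ‖(t • a : S)‖ ≤ 1 / 2 := by
    refine ⟨(2 * (‖a‖ + 1))⁻¹, by positivity, ?_⟩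
    rw [norm_smul, Real.norm_of_nonneg (by positivity), inv_mul_le_iff₀ (by positivity)]
    linarith
  have ha' : IsSelfAdjoint ((t • a : S) : A) :=
    congrArg Subtype.val (IsSelfAdjoint.smul (.all t) ha)
  obtain ⟨h₀, h₁⟩ := nonneg_add_half_and_le_one ha' hnorm
  have hle := map_mul_self_le_of_nonneg_of_le_one φ hone (a := t • a + algebraMap ℝ S (1 / 2)) h₀ h₁
  have hscale : φ ((t • a + algebraMap ℝ S (1 / 2)) * (t • a + algebraMap ℝ S (1 / 2))) -
      φ (t • a + algebraMap ℝ S (1 / 2)) * φ (t • a + algebraMap ℝ S (1 / 2)) =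
      (t * t) • (φ (a * a) - φ a * φ a) := by
    have hsmul : ∀ (r : ℝ) (x : S), φ (r • x) = r • φ x := φ.toLinearMap.map_smul_of_tower
    simp only [Algebra.algebraMap_eq_smul_one, mul_add, add_mul, map_add, hsmul, hone,
      smul_mul_assoc, mul_smul_comm, mul_one, one_mul]
    module
  rwa [← sub_nonneg, hscale, smul_nonneg_iff_nonneg_of_pos_left (by positivity), sub_nonneg] at hle

end Kadison

section SeparatingVector

variable {M : VonNeumannAlgebra H} {ξ₀ : H}

theorem IsSeparatingVector.isCyclicVector_commutant (hsep : IsSeparatingVector M ξ₀) :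
    IsCyclicVector M.commutant ξ₀ := by
  set K := (Submodule.span ℂ
    ((fun x : H →L[ℂ] H => x ξ₀) '' (M.commutant : Set (H →L[ℂ] H)))).topologicalClosure with hK
  have : CompleteSpace K := (Submodule.isClosed_topologicalClosure _).completeSpace_coe
  have hinv : ∀ T ∈ M.commutant, K ∈ Module.End.invtSubmodule (T : H →ₗ[ℂ] H) := by
    intro T hT
    refine Submodule.topologicalClosure_minimal _ (Submodule.span_le.mpr ?_)
      ((Submodule.isClosed_topologicalClosure _).preimage T.continuous)
    rintro _ ⟨x, hx, rfl⟩
    exact Submodule.le_topologicalClosure _ <| Submodule.subset_span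
      ⟨T * x, mul_mem (S := VonNeumannAlgebra H) hT hx, rfl⟩
  have hmem : K.starProjection ∈ M := by
    rw [VonNeumannAlgebra.IsStarProjection.mem_iff isStarProjection_starProjection]
    intro T hT
    simpa using hinv T hT
  have hξ : ξ₀ ∈ K := Submodule.le_topologicalClosure _ <| Submodule.subset_span
    ⟨1, one_mem M.commutant, rfl⟩
  have hone : 1 - K.starProjection = 0 := hsep _ (sub_mem (one_mem M) hmem) <| by
    simp [Submodule.starProjection_eq_self_iff.mpr hξ]
  rw [IsCyclicVector, Submodule.dense_iff_topologicalClosure_eq_top, ← hK, ← K.range_starProjection,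
    ← sub_eq_zero.mp hone]
  exact LinearMap.range_id

theorem exists_mem_apply_eq_of_mem_span_image {ζ : H}
    (hζ : ζ ∈ Submodule.span ℂ ((fun x : H →L[ℂ] H => x ξ₀) '' (M : Set (H →L[ℂ] H)))) :
    ∃ x ∈ M, x ξ₀ = ζ := by
  let V : Submodule ℂ H := M.toStarSubalgebra.toSubalgebra.toSubmodule.map
    (ContinuousLinearMap.apply ℂ H ξ₀ : (H →L[ℂ] H) →ₗ[ℂ] H)
  exact (Submodule.span_le (p := V)).mpr subset_rfl hζ

theorem inner_apply_apply_of_mem_commutant {b x : H →L[ℂ] H} (hb : b ∈ M) (hx : x ∈ M.commutant)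
    (η ζ : H) : ⟪b (x η), x ζ⟫_ℂ = ⟪b η, star x (x ζ)⟫_ℂ := by
  have hcomm : b (x η) = x (b η) := congr($(VonNeumannAlgebra.mem_commutant_iff.mp hx b hb) η)
  rw [hcomm, ContinuousLinearMap.star_eq_adjoint, ContinuousLinearMap.adjoint_inner_right]

open scoped ComplexOrder in
theorem inner_apply_nonneg_of_apply_mem_sharpCone {a x : H →L[ℂ] H} (ha : a ∈ M)
    (hcone : a ξ₀ ∈ sharpCone M ξ₀) (hx : x ∈ M.commutant) : 0 ≤ ⟪a (x ξ₀), x ξ₀⟫_ℂ := by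
  rw [inner_apply_apply_of_mem_commutant ha hx]
  refine closure_minimal (t := {η | 0 ≤ ⟪η, star x (x ξ₀)⟫_ℂ}) ?_
    (isClosed_le continuous_const (continuous_id.inner continuous_const)) hcone
  rintro _ ⟨b, hb, hpos, rfl⟩
  rw [Set.mem_ofPred_eq, ← inner_apply_apply_of_mem_commutant hb hx]
  exact hpos.inner_nonneg_left _

open scoped ComplexOrder in
theorem IsSeparatingVector.nonneg_of_apply_mem_sharpCone (hsep : IsSeparatingVector M ξ₀)
    {a : H →L[ℂ] H} (ha : a ∈ M) (hcone : a ξ₀ ∈ sharpCone M ξ₀) : 0 ≤ a := by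
  have horbit : ∀ ζ ∈ Submodule.span ℂ
      ((fun x : H →L[ℂ] H => x ξ₀) '' (M.commutant : Set (H →L[ℂ] H))), 0 ≤ ⟪a ζ, ζ⟫_ℂ := by
    intro ζ hζ
    obtain ⟨x, hx, rfl⟩ := exists_mem_apply_eq_of_mem_span_image hζ
    exact inner_apply_nonneg_of_apply_mem_sharpCone ha hcone hx
  have hnonneg : ∀ ζ : H, 0 ≤ ⟪a ζ, ζ⟫_ℂ := fun ζ =>
    closure_minimal (t := {ζ | 0 ≤ ⟪a ζ, ζ⟫_ℂ}) horbit
      (isClosed_le continuous_const (a.continuous.inner continuous_id))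
      (hsep.isCyclicVector_commutant ζ)
  rw [ContinuousLinearMap.nonneg_iff_isPositive, ContinuousLinearMap.isPositive_iff_complex]
  intro ζ
  have := Complex.nonneg_iff.mp (hnonneg ζ)
  exact ⟨Complex.ext (by simp) (by simpa using this.2), this.1⟩

theorem IsSeparatingVector.eq_zero_of_inner_eq_zero (hsep : IsSeparatingVector M ξ₀)
    {d : H →L[ℂ] H} (hd : d ∈ M) (hd₀ : 0 ≤ d) (h : ⟪d ξ₀, ξ₀⟫_ℂ = 0) : d = 0 := by
  obtain ⟨c, rfl⟩ := CStarAlgebra.nonneg_iff_eq_star_mul_self.mp hd₀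
  refine hsep _ hd ?_
  rw [ContinuousLinearMap.star_eq_adjoint, mul_apply_eq_comp,
    ContinuousLinearMap.adjoint_inner_left, inner_self_eq_zero] at h
  rw [mul_apply_eq_comp, h, map_zero]

theorem inner_mul_self_apply_of_isSelfAdjoint {T : H →L[ℂ] H} (hT : IsSelfAdjoint T) (ζ : H) :
    ⟪(T * T) ζ, ζ⟫_ℂ = ⟪T ζ, T ζ⟫_ℂ := by
  rw [mul_apply_eq_comp, ← ContinuousLinearMap.adjoint_inner_right, hT.adjoint_eq]

theorem IsSeparatingVector.isJordanHom (hsep : IsSeparatingVector M ξ₀)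
    {S : StarSubalgebra ℂ (H →L[ℂ] H)} (φ : S →ₚ[ℂ] (H →L[ℂ] H)) (hmem : ∀ x, φ x ∈ M)
    (hfix : ∀ x : S, φ x ξ₀ = (x : H →L[ℂ] H) ξ₀) : IsJordanHom φ.toLinearMap := by
  have hone : φ 1 = 1 := sub_eq_zero.mp <| hsep _ (sub_mem (hmem 1) (one_mem M)) <| by
    simp [hfix]
  refine .of_isSelfAdjoint fun a ha => sub_eq_zero.mp ?_
  refine hsep.eq_zero_of_inner_eq_zero (sub_mem (hmem _) (mul_mem (hmem _) (hmem _)))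
    (sub_nonneg.mpr (map_mul_self_le_of_isSelfAdjoint φ hone ha)) ?_
  have ha' : IsSelfAdjoint (a : H →L[ℂ] H) := congrArg Subtype.val ha
  have hφa : IsSelfAdjoint (φ a) := ha.map φ
  rw [sub_apply, inner_sub_left, PositiveLinearMap.coe_toLinearMap, hfix,
    MulMemClass.coe_mul, inner_mul_self_apply_of_isSelfAdjoint ha',
    inner_mul_self_apply_of_isSelfAdjoint hφa, hfix, sub_self]

end SeparatingVector

theorem stmt5_general (M : VonNeumannAlgebra H) (S : StarSubalgebra ℂ (H →L[ℂ] H)) (ξ₀ : H)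
    (hsep : IsSeparatingVector M ξ₀)
    (hpos : ∀ b ∈ S, b.IsPositive → b ξ₀ ∈ sharpCone M ξ₀)
    (α : (H →L[ℂ] H) → (H →L[ℂ] H))
    (hadd : ∀ x ∈ S, ∀ y ∈ S, α (x + y) = α x + α y)
    (hsmul : ∀ (c : ℂ), ∀ x ∈ S, α (c • x) = c • α x)
    (hmem : ∀ x ∈ S, α x ∈ M)
    (hfix : ∀ x ∈ S, (α x) ξ₀ = x ξ₀) :
    ∃ g : H →L[ℂ] H, g ∈ M ∧ IsSelfAdjoint g ∧ g * g = g ∧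
      g ∈ Set.centralizer (Set.centralizer {y : H →L[ℂ] H | ∃ x ∈ S, α x = y}) ∧
      (∀ x ∈ S, g * α x = α x * g) ∧
      (∀ x ∈ S, ∀ y ∈ S,
        α (x * y) * g = α x * α y * g ∧
        α (x * y) * (1 - g) = α y * α x * (1 - g)) := by
  let φ : S →ₚ[ℂ] (H →L[ℂ] H) := .mk₀
    { toFun := fun x => α x
      map_add' := fun x y => hadd x x.2 y y.2
      map_smul' := fun c x => hsmul c x x.2 }
    fun x hx => hsep.nonneg_of_apply_mem_sharpCone (hmem x x.2) <| by
      rw [LinearMap.coe_mk, AddHom.coe_mk, hfix x x.2]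
      exact hpos x x.2 ((ContinuousLinearMap.nonneg_iff_isPositive _).mp hx)
  have hφM : ∀ x, φ x ∈ M := fun x => hmem x x.2
  have hrange : Set.range φ = {y : H →L[ℂ] H | ∃ x ∈ S, α x = y} := by
    ext y
    exact ⟨fun ⟨x, hx⟩ => ⟨x, x.2, hx⟩, fun ⟨x, hxS, hx⟩ => ⟨⟨x, hxS⟩, hx⟩⟩
  obtain ⟨g, hg, hgen, hcomm, hmul⟩ :=
    (hsep.isJordanHom φ hφM fun x => hfix x x.2).exists_isStarProjection (map_star φ)
  have hgM : g ∈ M := by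
    have hsub : Set.range φ ⊆ M := Set.range_subset_iff.mpr hφM
    rw [← SetLike.mem_coe, ← M.centralizer_centralizer]
    exact Set.centralizer_subset (Set.centralizer_subset hsub) hgen
  exact ⟨g, hgM, hg.isSelfAdjoint, hg.isIdempotentElem.eq, hrange ▸ hgen,
    fun x hx => hcomm ⟨x, hx⟩, fun x hx y hy => hmul ⟨x, hx⟩ ⟨y, hy⟩⟩

/-- There is a projection `g ∈ M`, lying in the von Neumann algebra generated by
`α(N)` (its double commutant) and commuting with `α(N)`, such that `α(· ·) g` is homomorphic
and `α(· ·) (1 - g)` is antihomomorphic. -/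
theorem stmt5 (M N : VonNeumannAlgebra H) (ξ₀ : H)
    (hcyc : IsCyclicVector M ξ₀) (hsep : IsSeparatingVector M ξ₀)
    (hsub : closure {ζ : H | ∃ b : H →L[ℂ] H, b ∈ N ∧ b.IsPositive ∧ b ξ₀ = ζ} ⊆
      sharpCone M ξ₀)
    (α : (H →L[ℂ] H) → (H →L[ℂ] H))
    (hadd : ∀ x ∈ N, ∀ y ∈ N, α (x + y) = α x + α y)
    (hsmul : ∀ (c : ℂ), ∀ x ∈ N, α (c • x) = c • α x)
    (hmem : ∀ x ∈ N, α x ∈ M)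
    (hfix : ∀ x ∈ N, (α x) ξ₀ = x ξ₀) :
    ∃ g : H →L[ℂ] H, g ∈ M ∧ IsSelfAdjoint g ∧ g * g = g ∧
      g ∈ Set.centralizer (Set.centralizer {y : H →L[ℂ] H | ∃ x ∈ N, α x = y}) ∧
      (∀ x ∈ N, g * α x = α x * g) ∧
      (∀ x ∈ N, ∀ y ∈ N,
        α (x * y) * g = α x * α y * g ∧
        α (x * y) * (1 - g) = α y * α x * (1 - g)) :=
  stmt5_general M N.toStarSubalgebra ξ₀ hsep
    (fun b hb hpos => hsub (subset_closure ⟨b, hb, hpos, rfl⟩)) α hadd hsmul hmem hfix
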